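/- For 0 ≤ d ≤ 2 let α* = arcsin(d/2), Ξ(d) = [0,π] × [α*, π−α*], and define A(d) = sup{ min(L(d,σ,δ), R(d,σ,δ)) : (σ,δ) ∈ Ξ(d) }, where L(d,σ,δ) = 2π − 4·arcsin(d_L(d,σ,δ)/4) + 2δ and R(d,σ,δ) = 4π − 4·arcsin(d_R(d,σ,δ)/4) − 2δ. Then on the interval [0, √2] the function d ↦ A(d) is monotonically increasing and the function d ↦ A(d) − d is monotonically decreasing; moreover A(0) = 7π/3 and A(√2) = 5π/2. -/

import Mathlib

open Real

/-- Distance between the centers of the two left disks, in `(σ, δ)` coordinates. -/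
noncomputable def dL (d σ δ : ℝ) : ℝ :=
  Real.sqrt (d ^ 2 - 4 * d * Real.sin δ * Real.cos σ + 4 * Real.sin δ ^ 2)

/-- Distance between the centers of the two right disks, in `(σ, δ)` coordinates. -/
noncomputable def dR (d σ δ : ℝ) : ℝ :=
  Real.sqrt (d ^ 2 + 4 * d * Real.sin δ * Real.cos σ + 4 * Real.sin δ ^ 2)

/-- Length of the LRL-type bounded-curvature path. -/
noncomputable def Lfun (d σ δ : ℝ) : ℝ :=
  2 * π - 4 * Real.arcsin (dL d σ δ / 4) + 2 * δ

/-- Length of the RLR-type bounded-curvature path. -/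
noncomputable def Rfun (d σ δ : ℝ) : ℝ :=
  4 * π - 4 * Real.arcsin (dR d σ δ / 4) - 2 * δ

/-- Minimum of the LRL- and RLR-path lengths. -/
noncomputable def Cfun (d σ δ : ℝ) : ℝ :=
  min (Lfun d σ δ) (Rfun d σ δ)

/-- The supremum of `Cfun` over the rectangle `Ξ(d) = [0, π] × [α*, π - α*]`,
where `α* = arcsin (d/2)`. -/
noncomputable def Afun (d : ℝ) : ℝ :=
  sSup ((fun p : ℝ × ℝ => Cfun d p.1 p.2) ''
    (Set.Icc 0 π ×ˢ Set.Icc (Real.arcsin (d / 2)) (π - Real.arcsin (d / 2))))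

lemma le_of_sq_le_sq_aux {a b : ℝ} (hb : 0 ≤ b) (h : a ^ 2 ≤ b ^ 2) : a ≤ b :=
  (le_abs_self a).trans (abs_le_of_sq_le_sq h hb)

/-- The admissible parametrisation of the optimum. -/
def Par (d m h : ℝ) : Prop :=
  0 ≤ h ∧ h ≤ π / 8 ∧ π / 8 ≤ m ∧ m ≤ π / 6 ∧
    2 * Real.sin m * Real.cos h = Real.cos (2 * h) ∧ d = 4 * Real.cos m * Real.sin h

lemma L_low {d m h : ℝ} (H : Par d m h) {σ δ : ℝ} (h0 : 0 ≤ δ) (h1 : δ ≤ π / 2 - 2 * h) :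
    Lfun d σ δ ≤ 3 * π - 4 * m := by
  obtain ⟨a1, a2, a3, a4, e1, e2⟩ := H
  have hpi := Real.pi_pos
  have hd : 0 ≤ d := by
    rw [e2]
    have := Real.cos_nonneg_of_mem_Icc (x := m) ⟨by linarith, by linarith⟩
    have := Real.sin_nonneg_of_nonneg_of_le_pi (x := h) a1 (by linarith)
    positivity
  have hs : 0 ≤ Real.sin δ := Real.sin_nonneg_of_nonneg_of_le_pi h0 (by linarith)
  have hdL : 2 * Real.sin δ - d ≤ dL d σ δ := by
    apply Real.le_sqrt_of_sq_le
    nlinarith [mul_nonneg (mul_nonneg hd hs) (sub_nonneg.2 (Real.cos_le_one σ))]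
  obtain ⟨t, ht⟩ : ∃ t, t = (π / 2 - 2 * h - δ) / 2 := ⟨_, rfl⟩
  have hδ : δ = π / 2 - 2 * h - 2 * t := by linarith
  have ht0 : 0 ≤ t := by linarith
  -- the main inequality
  have key : Real.sin (m - h - t) ≤ (2 * Real.sin δ - d) / 4 := by
    have s1 : Real.sin (m - h) - Real.sin (m - h - t)
        = 2 * Real.sin (t / 2) * Real.cos (m - h - t / 2) := by
      rw [Real.sin_sub_sin]; congr 3 <;> ring
    have s2 : Real.sin (π / 2 - 2 * h) - Real.sin δ
        = 2 * Real.sin t * Real.cos (π / 2 - 2 * h - t) := by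
      rw [Real.sin_sub_sin, hδ]; congr 3 <;> ring
    have s3 : Real.sin t = 2 * Real.sin (t / 2) * Real.cos (t / 2) := by
      rw [← Real.sin_two_mul]; congr 1; ring
    have s4 : Real.sin (π / 2 - 2 * h) = Real.cos (2 * h) := Real.sin_pi_div_two_sub _
    have s5 : 0 ≤ Real.sin (t / 2) :=
      Real.sin_nonneg_of_nonneg_of_le_pi (by linarith) (by linarith)
    have s6 : 0 ≤ Real.cos (π / 2 - 2 * h - t) :=
      Real.cos_nonneg_of_mem_Icc ⟨by linarith, by linarith⟩
    have s7 : Real.cos (π / 2 - 2 * h - t) ≤ Real.cos (m - h - t / 2) := by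
      rw [← Real.cos_abs (m - h - t / 2)]
      apply Real.cos_le_cos_of_nonneg_of_le_pi (abs_nonneg _) (by linarith)
      rw [abs_le]; constructor <;> linarith
    have s8 : Real.cos (t / 2) * Real.cos (π / 2 - 2 * h - t) ≤ Real.cos (m - h - t / 2) := by
      nlinarith [Real.cos_le_one (t / 2)]
    have s9 := mul_le_mul_of_nonneg_left s8 s5
    have s10 : 4 * Real.sin (m - h) = 2 * Real.cos (2 * h) - d := by
      rw [Real.sin_sub, e2, ← e1]; ring
    rw [s4, s3] at s2
    nlinarith
  have hp : m - h - t ≤ Real.arcsin (dL d σ δ / 4) := by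
    calc m - h - t = Real.arcsin (Real.sin (m - h - t)) :=
          (Real.arcsin_sin (by linarith) (by linarith)).symm
      _ ≤ _ := Real.monotone_arcsin (by linarith)
  unfold Lfun
  linarith

lemma R_eq (d σ δ : ℝ) : Rfun d σ δ = Lfun d (π - σ) (π - δ) := by
  unfold Rfun Lfun dL dR
  rw [Real.sin_pi_sub, Real.cos_pi_sub]
  have : d ^ 2 - 4 * d * Real.sin δ * -Real.cos σ + 4 * Real.sin δ ^ 2
    = d ^ 2 + 4 * d * Real.sin δ * Real.cos σ + 4 * Real.sin δ ^ 2 := by ring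
  rw [this]; ring

lemma sum_mid {d m h : ℝ} (H : Par d m h) (hd2 : d ≤ 2) {σ δ : ℝ} (h0 : π / 2 - 2 * h ≤ δ)
    (h1 : δ ≤ π - (π / 2 - 2 * h)) :
    Lfun d σ δ + Rfun d σ δ ≤ 6 * π - 8 * m := by
  obtain ⟨a1, a2, a3, a4, e1, e2⟩ := H
  have hpi := Real.pi_pos
  have hd : 0 ≤ d := by
    rw [e2]
    have := Real.cos_nonneg_of_mem_Icc (x := m) ⟨by linarith, by linarith⟩
    have := Real.sin_nonneg_of_nonneg_of_le_pi (x := h) a1 (by linarith)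
    positivity
  have hD0 : 0 < Real.cos (2 * h) := Real.cos_pos_of_mem_Ioo ⟨by linarith, by linarith⟩
  have hC0 : 0 < Real.cos (2 * m) := Real.cos_pos_of_mem_Ioo ⟨by linarith, by linarith⟩
  have hs : Real.cos (2 * h) ≤ Real.sin δ := by
    rw [← Real.cos_pi_div_two_sub, ← Real.cos_abs (π / 2 - δ)]
    apply Real.cos_le_cos_of_nonneg_of_le_pi (abs_nonneg _) (by linarith)
    rw [abs_le]; constructor <;> linarith
  have hs1 := Real.sin_le_one δ
  set s := Real.sin δ with hsdef
  have hds : 0 ≤ d * s := mul_nonneg hd (by linarith)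
  have hc1 := Real.cos_le_one σ
  have hc2 := Real.neg_one_le_cos σ
  have nx : 0 ≤ d ^ 2 - 4 * d * s * Real.cos σ + 4 * s ^ 2 := by
    nlinarith [mul_nonneg hds (sub_nonneg.2 hc1), sq_nonneg (d - 2 * s)]
  have ny : 0 ≤ d ^ 2 + 4 * d * s * Real.cos σ + 4 * s ^ 2 := by
    nlinarith [mul_nonneg hds (by linarith : 0 ≤ 1 + Real.cos σ), sq_nonneg (d - 2 * s)]
  have hx0 : 0 ≤ dL d σ δ := Real.sqrt_nonneg _
  have hy0 : 0 ≤ dR d σ δ := Real.sqrt_nonneg _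
  have hx2 : dL d σ δ ^ 2 = d ^ 2 - 4 * d * s * Real.cos σ + 4 * s ^ 2 := Real.sq_sqrt nx
  have hy2 : dR d σ δ ^ 2 = d ^ 2 + 4 * d * s * Real.cos σ + 4 * s ^ 2 := Real.sq_sqrt ny
  unfold Lfun Rfun
  set x := dL d σ δ
  set y := dR d σ δ
  have hsx : (d + 2 * s) ^ 2 ≤ 16 := by nlinarith
  have hx4 : x ≤ 4 := by
    apply le_of_sq_le_sq_aux (by norm_num)
    nlinarith [mul_nonneg hds (by linarith : 0 ≤ 1 + Real.cos σ)]
  have hy4 : y ≤ 4 := by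
    apply le_of_sq_le_sq_aux (by norm_num)
    nlinarith [mul_nonneg hds (sub_nonneg.2 hc1)]
  have hxy : 4 * s ^ 2 - d ^ 2 ≤ x * y := by
    apply le_of_sq_le_sq_aux (mul_nonneg hx0 hy0)
    rw [mul_pow, hx2, hy2]
    nlinarith [mul_nonneg (sq_nonneg (d * s)) (sub_nonneg.2 (Real.cos_sq_le_one σ))]
  have sa : Real.sin (Real.arcsin (x / 4)) = x / 4 :=
    Real.sin_arcsin (by linarith) (by linarith)
  have sb : Real.sin (Real.arcsin (y / 4)) = y / 4 :=
    Real.sin_arcsin (by linarith) (by linarith)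
  have ha0 : 0 ≤ Real.arcsin (x / 4) := Real.arcsin_nonneg.2 (by linarith)
  have hb0 : 0 ≤ Real.arcsin (y / 4) := Real.arcsin_nonneg.2 (by linarith)
  set a := Real.arcsin (x / 4)
  set b := Real.arcsin (y / 4)
  suffices 2 * m ≤ a + b by linarith
  by_contra hlt
  push Not at hlt
  have hC : Real.cos (2 * m) < Real.cos (a + b) :=
    Real.cos_lt_cos_of_nonneg_of_le_pi (by linarith) (by linarith) hlt
  have i1 : Real.cos (a + b) * Real.cos (a - b) = 1 - (x / 4) ^ 2 - (y / 4) ^ 2 := by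
    rw [Real.cos_add, Real.cos_sub, ← sa, ← sb]
    have u := Real.sin_sq a
    have v := Real.sin_sq b
    linear_combination Real.cos a ^ 2 * v + (1 - Real.sin b ^ 2) * u
  have i2 : Real.cos (a - b) - Real.cos (a + b) = 2 * ((x / 4) * (y / 4)) := by
    rw [Real.cos_add, Real.cos_sub, ← sa, ← sb]; ring
  have j1 : Real.cos (2 * m) * Real.cos (2 * h) = 1 - (d ^ 2 + 4 * Real.cos (2 * h) ^ 2) / 8 := by
    have : Real.cos (2 * h) ^ 2 = (2 * Real.sin m * Real.cos h) ^ 2 := by rw [e1]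
    rw [this, e2, Real.cos_two_mul, Real.cos_two_mul]
    have u := Real.sin_sq m
    have v := Real.sin_sq h
    ring_nf
    rw [u, v]; ring
  have j2 : Real.cos (2 * h) - Real.cos (2 * m) = (4 * Real.cos (2 * h) ^ 2 - d ^ 2) / 8 := by
    have : Real.cos (2 * h) ^ 2 = (2 * Real.sin m * Real.cos h) ^ 2 := by rw [e1]
    rw [this, e2, Real.cos_two_mul, Real.cos_two_mul]
    have u := Real.sin_sq m
    have v := Real.sin_sq h
    ring_nf
    rw [u, v]; ring
  have hss : Real.cos (2 * h) ^ 2 ≤ s ^ 2 := pow_le_pow_left₀ hD0.le hs 2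
  have hD : Real.cos (2 * h) < Real.cos (a - b) := by linarith
  have hCD : Real.cos (2 * m) * Real.cos (2 * h) < Real.cos (a + b) * Real.cos (a - b) :=
    mul_lt_mul'' hC hD hC0.le hD0.le
  rw [i1, j1] at hCD
  linarith

lemma Par_d_le {d m h : ℝ} (H : Par d m h) : 0 ≤ d ∧ d ≤ 2 ∧ d / 2 ≤ Real.cos (2 * h) := by
  obtain ⟨a1, a2, a3, a4, e1, e2⟩ := H
  have hpi := Real.pi_pos
  have h3 := Real.cos_nonneg_of_mem_Icc (x := m) ⟨by linarith, by linarith⟩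
  have h4 := Real.sin_nonneg_of_nonneg_of_le_pi (x := h) a1 (by linarith)
  have h5 : 0 ≤ Real.sin (m - h) := Real.sin_nonneg_of_nonneg_of_le_pi (by linarith) (by linarith)
  rw [Real.sin_sub] at h5
  have h6 : d / 2 ≤ Real.cos (2 * h) := by rw [← e1, e2]; linarith
  refine ⟨by rw [e2]; positivity, ?_, h6⟩
  linarith [Real.cos_le_one (2 * h)]

lemma Afun_par {d m h : ℝ} (H : Par d m h) : Afun d = 3 * π - 4 * m := by
  obtain ⟨d0, d2, d3⟩ := Par_d_le H
  have H' := H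
  obtain ⟨a1, a2, a3, a4, e1, e2⟩ := H'
  have hpi := Real.pi_pos
  have hα : 0 ≤ Real.arcsin (d / 2) := Real.arcsin_nonneg.2 (by linarith)
  have hα2 : Real.arcsin (d / 2) ≤ π / 2 - 2 * h := by
    rw [← Real.sin_pi_div_two_sub] at d3
    calc _ ≤ Real.arcsin (Real.sin (π / 2 - 2 * h)) := Real.monotone_arcsin d3
      _ = _ := Real.arcsin_sin (by linarith) (by linarith)
  apply IsGreatest.csSup_eq
  constructor
  · refine ⟨(0, π / 2 - 2 * h), ⟨⟨le_rfl, hpi.le⟩, hα2, by linarith⟩, ?_⟩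
    have x1 : dL d 0 (π / 2 - 2 * h) / 4 = Real.sin (m - h) := by
      have : Real.sin (m - h) = |2 * Real.cos (2 * h) - d| / 4 := by
        rw [abs_of_nonneg (by linarith), ← e1, e2, Real.sin_sub]; ring
      rw [this, ← Real.sqrt_sq_eq_abs]
      unfold dL
      rw [Real.sin_pi_div_two_sub, Real.cos_zero]
      congr 2; ring
    have x2 : dR d 0 (π / 2 - 2 * h) / 4 = Real.sin (m + h) := by
      have : Real.sin (m + h) = |2 * Real.cos (2 * h) + d| / 4 := by
        rw [abs_of_nonneg (by linarith), ← e1, e2, Real.sin_add]; ring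
      rw [this, ← Real.sqrt_sq_eq_abs]
      unfold dR
      rw [Real.sin_pi_div_two_sub, Real.cos_zero]
      congr 2; ring
    simp only [Cfun, Lfun, Rfun, x1, x2]
    rw [Real.arcsin_sin (by linarith) (by linarith), Real.arcsin_sin (by linarith) (by linarith)]
    rw [min_eq_left (by linarith)]; ring
  · rintro _ ⟨⟨σ, δ⟩, ⟨hσ, hδ⟩, rfl⟩
    obtain ⟨hδ1, hδ2⟩ := hδ
    simp only at hδ1 hδ2 ⊢
    unfold Cfun
    rcases le_total δ (π / 2 - 2 * h) with c | c
    · exact (min_le_left _ _).trans (L_low H (by linarith) c)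
    · rcases le_total δ (π - (π / 2 - 2 * h)) with c' | c'
      · have := sum_mid H d2 (σ := σ) c c'
        rcases le_total (Lfun d σ δ) (Rfun d σ δ) with g | g
        · exact (min_le_left _ _).trans (by linarith)
        · exact (min_le_right _ _).trans (by linarith)
      · refine (min_le_right _ _).trans ?_
        rw [R_eq]
        exact L_low H (by linarith) (by linarith)

lemma sin_pi8 : Real.cos (2 * (π / 8)) = 2 * Real.sin (π / 8) * Real.cos (π / 8) := by
  rw [← Real.sin_two_mul]
  rw [show 2 * (π / 8) = π / 4 by ring, Real.cos_pi_div_four, Real.sin_pi_div_four]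

lemma cos_pi8_sq : Real.cos (π / 8) ^ 2 = (2 + √2) / 4 := by
  rw [Real.cos_sq, show 2 * (π / 8) = π / 4 by ring, Real.cos_pi_div_four]; ring

lemma Par_zero : Par 0 (π / 6) 0 := by
  have hpi := Real.pi_pos
  refine ⟨le_rfl, by linarith, by linarith, le_rfl, ?_, ?_⟩ <;> simp

lemma four_cs : 4 * Real.cos (π / 8) * Real.sin (π / 8) = √2 := by
  have := sin_pi8
  rw [show 2 * (π / 8) = π / 4 by ring, Real.cos_pi_div_four] at this
  linarith

lemma Par_end : Par (√2) (π / 8) (π / 8) := by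
  have hpi := Real.pi_pos
  exact ⟨by linarith, le_rfl, le_rfl, by linarith, sin_pi8.symm, four_cs.symm⟩

lemma Par_exists {d : ℝ} (hd : d ∈ Set.Icc 0 (√2)) : ∃ m h, Par d m h := by
  have hpi := Real.pi_pos
  have hcpos : ∀ h ∈ Set.Icc 0 (π / 8), 0 < Real.cos h := fun h hh =>
    Real.cos_pos_of_mem_Ioo ⟨by linarith [hh.1], by linarith [hh.2]⟩
  let f : ℝ → ℝ := fun h =>
    4 * Real.cos (Real.arcsin (Real.cos (2 * h) / (2 * Real.cos h))) * Real.sin h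
  have hf : ContinuousOn f (Set.Icc 0 (π / 8)) := by
    have : ContinuousOn (fun h => Real.cos (2 * h) / (2 * Real.cos h)) (Set.Icc 0 (π / 8)) := by
      apply ContinuousOn.div (by fun_prop) (by fun_prop)
      intro h hh
      have := hcpos h hh
      positivity
    have h2 := Real.continuous_arcsin.comp_continuousOn this
    have h3 := Real.continuous_cos.comp_continuousOn h2
    exact (continuousOn_const.mul h3).mul Real.continuous_sin.continuousOn
  have f0 : f 0 = 0 := by simp [f]
  have f1 : f (π / 8) = √2 := by
    have hc := hcpos (π / 8) ⟨by linarith, le_rfl⟩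
    simp only [f]
    rw [sin_pi8, show 2 * Real.sin (π / 8) * Real.cos (π / 8) / (2 * Real.cos (π / 8))
      = Real.sin (π / 8) by field_simp, Real.arcsin_sin (by linarith) (by linarith), four_cs]
  have := intermediate_value_Icc (by linarith : (0:ℝ) ≤ π / 8) hf
  rw [f0, f1] at this
  obtain ⟨h, hh, rfl⟩ := this hd
  have hc := hcpos h hh
  have hc8 := hcpos (π / 8) ⟨by linarith, le_rfl⟩
  have hc1 := Real.cos_le_one h
  have hcc : Real.cos (π / 8) ≤ Real.cos h :=
    Real.cos_le_cos_of_nonneg_of_le_pi hh.1 (by linarith) hh.2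
  have b1 : Real.cos (2 * h) / (2 * Real.cos h) ≤ 1 / 2 := by
    rw [div_le_div_iff₀ (by positivity) (by norm_num), Real.cos_two_mul]
    nlinarith
  have b2 : Real.sin (π / 8) ≤ Real.cos (2 * h) / (2 * Real.cos h) := by
    have : Real.sin (π / 8) = Real.cos (2 * (π / 8)) / (2 * Real.cos (π / 8)) := by
      rw [sin_pi8]; field_simp
    rw [this, div_le_div_iff₀ (by positivity) (by positivity), Real.cos_two_mul, Real.cos_two_mul]
    nlinarith [mul_pos hc hc8, mul_nonneg (mul_pos hc hc8).le (sub_nonneg.2 hcc)]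
  have b3 : 0 ≤ Real.sin (π / 8) := Real.sin_nonneg_of_nonneg_of_le_pi (by linarith) (by linarith)
  refine ⟨Real.arcsin (Real.cos (2 * h) / (2 * Real.cos h)), h, hh.1, hh.2, ?_, ?_, ?_, rfl⟩
  · calc π / 8 = Real.arcsin (Real.sin (π / 8)) :=
          (Real.arcsin_sin (by linarith) (by linarith)).symm
      _ ≤ _ := Real.monotone_arcsin b2
  · calc _ ≤ Real.arcsin (Real.sin (π / 6)) := by
          apply Real.monotone_arcsin; rw [Real.sin_pi_div_six]; exact b1
      _ = _ := Real.arcsin_sin (by linarith) (by linarith)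
  · rw [Real.sin_arcsin (by linarith) (by linarith)]
    field_simp

lemma Par_cmp {d₁ m₁ h₁ d₂ m₂ h₂ : ℝ} (H₁ : Par d₁ m₁ h₁) (H₂ : Par d₂ m₂ h₂) (hh : h₁ ≤ h₂) :
    d₁ ≤ d₂ ∧ m₂ ≤ m₁ ∧ 4 * (m₁ - m₂) ≤ d₂ - d₁ := by
  obtain ⟨a1, a2, a3, a4, e1, e2⟩ := H₁
  obtain ⟨b1, b2, b3, b4, f1, f2⟩ := H₂
  have hpi := Real.pi_pos
  have c1 : 0 < Real.cos h₁ := Real.cos_pos_of_mem_Ioo ⟨by linarith, by linarith⟩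
  have c2 : 0 < Real.cos h₂ := Real.cos_pos_of_mem_Ioo ⟨by linarith, by linarith⟩
  have c8 : 0 < Real.cos (π / 8) := Real.cos_pos_of_mem_Ioo ⟨by linarith, by linarith⟩
  have cc : Real.cos h₂ ≤ Real.cos h₁ := Real.cos_le_cos_of_nonneg_of_le_pi a1 (by linarith) hh
  have cc8 : Real.cos (π / 8) ≤ Real.cos h₂ :=
    Real.cos_le_cos_of_nonneg_of_le_pi b1 (by linarith) b2
  have x1 : 0 ≤ Real.sin h₁ := Real.sin_nonneg_of_nonneg_of_le_pi a1 (by linarith)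
  have xx : Real.sin h₁ ≤ Real.sin h₂ :=
    Real.sin_le_sin_of_le_of_le_pi_div_two (by linarith) (by linarith) hh
  -- `sin m` difference
  have g1 : Real.sin m₁ = Real.cos h₁ - 1 / (2 * Real.cos h₁) := by
    rw [Real.cos_two_mul] at e1; field_simp; linarith
  have g2 : Real.sin m₂ = Real.cos h₂ - 1 / (2 * Real.cos h₂) := by
    rw [Real.cos_two_mul] at f1; field_simp; linarith
  have g3 : Real.sin m₁ - Real.sin m₂
      = (Real.cos h₁ - Real.cos h₂) * (1 + 1 / (2 * (Real.cos h₁ * Real.cos h₂))) := by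
    rw [g1, g2]; field_simp; ring
  have g4 : 0 ≤ Real.sin m₁ - Real.sin m₂ := by
    rw [g3]; have := sub_nonneg.2 cc; positivity
  have mm : m₂ ≤ m₁ := by
    by_contra hlt
    push Not at hlt
    have := Real.sin_lt_sin_of_lt_of_le_pi_div_two (x := m₁) (y := m₂) (by linarith) (by linarith) hlt
    linarith
  have k1 : Real.cos (π / 6) ≤ Real.cos m₁ :=
    Real.cos_le_cos_of_nonneg_of_le_pi (by linarith) (by linarith) a4
  have k2 : Real.cos m₁ ≤ Real.cos m₂ :=
    Real.cos_le_cos_of_nonneg_of_le_pi (by linarith) (by linarith) mm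
  have k0 : (0.866 : ℝ) ≤ Real.cos (π / 6) := by
    rw [Real.cos_pi_div_six]
    have : (1.732 : ℝ) ≤ √3 := Real.le_sqrt_of_sq_le (by norm_num)
    linarith
  have dd : 4 * Real.cos m₁ * (Real.sin h₂ - Real.sin h₁) ≤ d₂ - d₁ := by
    rw [e2, f2]; nlinarith
  have dd0 : d₁ ≤ d₂ := by
    have : 0 ≤ 4 * Real.cos m₁ * (Real.sin h₂ - Real.sin h₁) :=
      mul_nonneg (by linarith) (by linarith)
    linarith
  refine ⟨dd0, mm, ?_⟩
  -- lower bound of sine difference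
  have s1 : Real.cos m₁ * (m₁ - m₂) ≤ Real.sin m₁ - Real.sin m₂ := by
    have mv := (convex_Icc m₂ m₁).mul_sub_le_image_sub_of_le_deriv (f := Real.sin)
      (C := Real.cos m₁) Real.continuous_sin.continuousOn Real.differentiable_sin.differentiableOn
      (by
        intro x hx
        rw [interior_Icc] at hx
        rw [Real.deriv_sin]
        exact Real.cos_le_cos_of_nonneg_of_le_pi (by linarith [hx.1]) (by linarith) hx.2.le)
    exact mv m₂ ⟨le_rfl, mm⟩ m₁ ⟨mm, le_rfl⟩ mm
  have q2 : (1.414 : ℝ) ≤ √2 := Real.le_sqrt_of_sq_le (by norm_num)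
  have q8 : (0.92 : ℝ) ≤ Real.cos (π / 8) := by
    have := cos_pi8_sq
    nlinarith
  have q1 : (Real.cos h₁ - Real.cos h₂) * (Real.cos h₁ + Real.cos h₂)
      = (Real.sin h₂ - Real.sin h₁) * (Real.sin h₂ + Real.sin h₁) := by
    linear_combination Real.sin_sq_add_cos_sq h₁ - Real.sin_sq_add_cos_sq h₂
  have q3 : Real.sin h₂ ≤ 0.4 := by
    have := Real.sin_sq_add_cos_sq h₂
    nlinarith
  have q4 : Real.cos h₁ - Real.cos h₂ ≤ (Real.sin h₂ - Real.sin h₁) * 0.4348 := by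
    have : (Real.cos h₁ - Real.cos h₂) * 1.84 ≤ (Real.sin h₂ - Real.sin h₁) * 0.8 := by
      have v1 : (Real.cos h₁ - Real.cos h₂) * 1.84
          ≤ (Real.cos h₁ - Real.cos h₂) * (Real.cos h₁ + Real.cos h₂) :=
        mul_le_mul_of_nonneg_left (by linarith) (by linarith)
      have v2 : (Real.sin h₂ - Real.sin h₁) * (Real.sin h₂ + Real.sin h₁)
          ≤ (Real.sin h₂ - Real.sin h₁) * 0.8 :=
        mul_le_mul_of_nonneg_left (by linarith) (by linarith)
      linarith
    linarith
  have q5 : 1 / (2 * (Real.cos h₁ * Real.cos h₂)) ≤ 0.6 := by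
    rw [div_le_iff₀ (by positivity)]
    have := mul_le_mul (by linarith : (0.92 : ℝ) ≤ Real.cos h₁)
      (by linarith : (0.92 : ℝ) ≤ Real.cos h₂) (by norm_num) c1.le
    linarith
  have q6 : Real.sin m₁ - Real.sin m₂ ≤ (Real.sin h₂ - Real.sin h₁) * 0.7 := by
    rw [g3]
    have v1 : (Real.cos h₁ - Real.cos h₂) * (1 + 1 / (2 * (Real.cos h₁ * Real.cos h₂)))
        ≤ (Real.cos h₁ - Real.cos h₂) * 1.6 :=
      mul_le_mul_of_nonneg_left (by linarith) (by linarith)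
    linarith
  -- combine
  have r1 : 0.866 * (m₁ - m₂) ≤ (Real.sin h₂ - Real.sin h₁) * 0.7 := by
    have v1 := mul_le_mul_of_nonneg_right (k0.trans k1) (sub_nonneg.2 mm)
    linarith
  have r2 : 3.464 * (Real.sin h₂ - Real.sin h₁) ≤ d₂ - d₁ := by
    have v1 := mul_le_mul_of_nonneg_right (k0.trans k1) (sub_nonneg.2 xx)
    linarith
  linarith

/-- On `[0, √2]` the function `d ↦ A(d)` is monotonically
increasing and `d ↦ A(d) - d` is monotonically decreasing; moreover
`A(0) = 7π/3` and `A(√2) = 5π/2`. -/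
theorem A_monotonicity :
    MonotoneOn Afun (Set.Icc 0 (Real.sqrt 2)) ∧
    AntitoneOn (fun d => Afun d - d) (Set.Icc 0 (Real.sqrt 2)) ∧
    Afun 0 = 7 * π / 3 ∧ Afun (Real.sqrt 2) = 5 * π / 2 := by
  have cmp : ∀ d₁ ∈ Set.Icc 0 (√2), ∀ d₂ ∈ Set.Icc 0 (√2), d₁ ≤ d₂ →
      Afun d₁ ≤ Afun d₂ ∧ Afun d₂ - d₂ ≤ Afun d₁ - d₁ := by
    intro d₁ hd₁ d₂ hd₂ hle
    obtain ⟨m₁, h₁, H₁⟩ := Par_exists hd₁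
    obtain ⟨m₂, h₂, H₂⟩ := Par_exists hd₂
    rcases le_total h₁ h₂ with c | c
    · obtain ⟨-, u, v⟩ := Par_cmp H₁ H₂ c
      rw [Afun_par H₁, Afun_par H₂]
      constructor <;> linarith
    · obtain ⟨w, -, -⟩ := Par_cmp H₂ H₁ c
      obtain rfl : d₁ = d₂ := le_antisymm hle w
      exact ⟨le_rfl, le_rfl⟩
  refine ⟨fun a ha b hb hab => (cmp a ha b hb hab).1,
    fun a ha b hb hab => (cmp a ha b hb hab).2, ?_, ?_⟩
  · rw [Afun_par Par_zero]; ring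
  · rw [Afun_par Par_end]; ring
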